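/- There is a constant C ≥ 0 such that the following holds for every precision p ≥ 6, u = 2^(1−p), every fixed rounding function R ∈ {RD, RU} used at every operation, all o_x, o_y ∈ [1, 1/(8u) − 2], and all x_h, x_l, y_h, y_l ∈ F_p with |x_l| ≤ o_x·u·|x_h| and |y_l| ≤ o_y·u·|y_h|, under the sign condition that x_l ≥ 0 and y_l ≥ 0 if R = RD, and x_l ≤ 0 and y_l ≤ 0 if R = RU. The modified accurate double-word addition, in which the step (t_h, t_l) = 2Sum(x_l, y_l) is replaced by (t_h, t_l) = Fast2Sum(x_l, y_l) if |x_l| ≥ |y_l| and (t_h, t_l) = Fast2Sum(y_l, x_l) otherwise, satisfies |z_h + z_l − S| ≤ ((3o + 15)·u² + C·(1 + o)·u³)·|S|, where o = max(o_x, o_y) and S = x_h + x_l + y_h + y_l. -/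

import Mathlib

/-!
Since `RU x = -RD (-x)`, the whole algorithm commutes with negation, and it suffices to treat
rounding down with `x_l, y_l ≥ 0`. In that case `Fast2Sum` on the low parts is error-free
(`fast2Sum_nonneg`): with `T = x_l + y_l` one has `t_h = RD T` and `t_l = T - t_h`. Put
`q = o u ≤ 1/8 - 2u`, so that `0 ≤ T ≤ q (|x_h| + |y_h|)`.

The basic tool is divisibility by powers of two: a multiple of `2 ^ e` of absolute value at most
`2 ^ (p + e)` is a floating-point number, and rounding preserves divisibility by `2 ^ e`.

* Cancellation, `|x_h| + |y_h| > 3 |x_h + y_h|` (`cancel_err`). The sum `s_h = x_h + y_h` is exact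
  and is a multiple of the spacing of `t_h`, so both later `Fast2Sum` steps behave well; either
  `s_h + t_h` is exact, or it dominates `t_l`. The error is at most `15 u² |S|`.
* No cancellation (`spread_err`). The second output of `2Sum` has a defect of at most
  `(6u² + 5u³) |s_h|` (`twoSum_err`). The rounding error of `c = RD (s_l + t_h)` is controlled by
  `RD_add_cases`: it can be of size `u t_h` only if `|s_l + t_h| ≥ min |x_h| |y_h|`, which forces
  `|x_h| + |y_h| ≤ 3 |S|` and so contributes `3 o u² |S|`; otherwise it is at most `2u |s_l|` or
  at most `(u / 2) |s_l + t_h|`, the halved constant compensating for a larger ratio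
  `(|x_h| + |y_h|) / |S|`. The last two steps cost `3u² |s_h + c|` to leading order
  (`tail_err`), and `collect` adds everything up.
-/

/-- The radix-2, precision-`p` floating-point numbers with unlimited exponent range. -/
def Fp (p : ℕ) : Set ℝ := {x : ℝ | ∃ M e : ℤ, |M| ≤ 2 ^ p - 1 ∧ x = (M : ℝ) * (2 : ℝ) ^ e}

/-- Round toward `-∞`: the largest floating-point number `≤ x`. -/
noncomputable def RD (p : ℕ) (x : ℝ) : ℝ := sSup {f : ℝ | f ∈ Fp p ∧ f ≤ x}

/-- Round toward `+∞`: the smallest floating-point number `≥ x`. -/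
noncomputable def RU (p : ℕ) (x : ℝ) : ℝ := sInf {f : ℝ | f ∈ Fp p ∧ x ≤ f}

/-- `y` is a faithful rounding of `x`. -/
def Faithful (p : ℕ) (x y : ℝ) : Prop := y = RD p x ∨ y = RU p x

/-- `2Sum(a,b)` with rounding function `R`. -/
noncomputable def twoSum (R : ℝ → ℝ) (a b : ℝ) : ℝ × ℝ :=
  let s := R (a + b)
  let a' := R (s - b)
  let b' := R (s - a')
  (s, R (R (a - a') + R (b - b')))

/-- `Fast2Sum(a,b)` with rounding function `R`. -/
noncomputable def fast2Sum (R : ℝ → ℝ) (a b : ℝ) : ℝ × ℝ :=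
  let s := R (a + b)
  let d := R (s - a)
  (s, R (b - d))

/-- Accurate double-word addition with rounding function `R`. -/
noncomputable def accurateAdd (R : ℝ → ℝ) (xh xl yh yl : ℝ) : ℝ × ℝ :=
  let s := twoSum R xh yh
  let t := twoSum R xl yl
  let c := R (s.2 + t.1)
  let v := fast2Sum R s.1 c
  let w := R (t.2 + v.2)
  fast2Sum R v.1 w

/-- Modified accurate double-word addition: the step `(t_h,t_l) = 2Sum(x_l,y_l)` is
replaced by `Fast2Sum` applied to `(x_l,y_l)` ordered by decreasing absolute value. -/
noncomputable def modAccurateAdd (R : ℝ → ℝ) (xh xl yh yl : ℝ) : ℝ × ℝ :=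
  let s := twoSum R xh yh
  let t := if |yl| ≤ |xl| then fast2Sum R xl yl else fast2Sum R yl xl
  let c := R (s.2 + t.1)
  let v := fast2Sum R s.1 c
  let w := R (t.2 + v.2)
  fast2Sum R v.1 w

/-! ### Integer multiples of powers of two -/

/-- `x` is an integer multiple of `2 ^ e`. -/
def IsMul (e : ℤ) (x : ℝ) : Prop := ∃ n : ℤ, x = (n : ℝ) * (2 : ℝ) ^ e

lemma two_zpow_pos (e : ℤ) : (0 : ℝ) < (2 : ℝ) ^ e := by positivity

lemma two_zpow_le {a b : ℤ} (h : a ≤ b) : (2 : ℝ) ^ a ≤ (2 : ℝ) ^ b :=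
  zpow_le_zpow_right₀ (by norm_num) h

lemma le_of_two_zpow_lt {a b : ℤ} (h : (2 : ℝ) ^ a < (2 : ℝ) ^ b) : a < b :=
  (zpow_lt_zpow_iff_right₀ (by norm_num)).1 h

lemma IsMul.add {e : ℤ} {x y : ℝ} (hx : IsMul e x) (hy : IsMul e y) : IsMul e (x + y) := by
  obtain ⟨n, rfl⟩ := hx
  obtain ⟨m, rfl⟩ := hy
  exact ⟨n + m, by push_cast; ring⟩

lemma IsMul.neg {e : ℤ} {x : ℝ} (hx : IsMul e x) : IsMul e (-x) := by
  obtain ⟨n, rfl⟩ := hx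
  exact ⟨-n, by push_cast; ring⟩

lemma IsMul.sub {e : ℤ} {x y : ℝ} (hx : IsMul e x) (hy : IsMul e y) : IsMul e (x - y) := by
  rw [sub_eq_add_neg]
  exact hx.add hy.neg

lemma isMul_two_zpow {e f : ℤ} (h : e ≤ f) : IsMul e ((2 : ℝ) ^ f) := by
  obtain ⟨k, hk⟩ := Int.eq_ofNat_of_zero_le (sub_nonneg.2 h)
  refine ⟨2 ^ k, ?_⟩
  have : f = (k : ℤ) + e := by omega
  rw [this, zpow_add₀ (by norm_num)]
  push_cast
  rw [zpow_natCast]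

lemma IsMul.mono {e f : ℤ} {x : ℝ} (h : e ≤ f) (hx : IsMul f x) : IsMul e x := by
  obtain ⟨n, rfl⟩ := hx
  obtain ⟨m, hm⟩ := isMul_two_zpow h
  exact ⟨n * m, by rw [hm]; push_cast; ring⟩

/-- Distinct multiples of `2 ^ e` are at least `2 ^ e` apart. -/
lemma IsMul.gap {e : ℤ} {x y : ℝ} (hx : IsMul e x) (hy : IsMul e y) (h : x < y) :
    x + (2 : ℝ) ^ e ≤ y := by
  obtain ⟨n, rfl⟩ := hx
  obtain ⟨m, rfl⟩ := hy
  have h1 : (n : ℝ) < m := lt_of_mul_lt_mul_right h (two_zpow_pos e).le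
  have h2 : n + 1 ≤ m := by exact_mod_cast h1
  have h3 : (n : ℝ) + 1 ≤ m := by exact_mod_cast h2
  nlinarith [two_zpow_pos e]

/-! ### Membership in `Fp p` -/

lemma neg_mem {p : ℕ} {x : ℝ} (hx : x ∈ Fp p) : -x ∈ Fp p := by
  obtain ⟨M, e, hM, rfl⟩ := hx
  exact ⟨-M, e, by rwa [abs_neg], by push_cast; ring⟩

lemma zero_mem (p : ℕ) : (0 : ℝ) ∈ Fp p :=
  ⟨0, 0, by simpa using (one_le_pow₀ (by norm_num : (1 : ℤ) ≤ 2)), by simp⟩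

lemma two_zpow_natCast_add (p : ℕ) (e : ℤ) : (2 : ℝ) ^ ((p : ℤ) + e) = (2 : ℝ) ^ p * (2 : ℝ) ^ e := by
  rw [zpow_add₀ (by norm_num), zpow_natCast]

lemma mem_of_isMul {p : ℕ} (hp : 1 ≤ p) {e : ℤ} {x : ℝ} (hx : IsMul e x)
    (h : |x| ≤ (2 : ℝ) ^ ((p : ℤ) + e)) : x ∈ Fp p := by
  obtain ⟨n, rfl⟩ := hx
  have h2 : (2 : ℤ) ≤ 2 ^ p := by
    calc (2 : ℤ) = 2 ^ 1 := by norm_num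
      _ ≤ 2 ^ p := pow_le_pow_right₀ (by norm_num) hp
  rw [two_zpow_natCast_add, abs_mul, abs_of_pos (two_zpow_pos e)] at h
  have h1 : |(n : ℝ)| ≤ (2 : ℝ) ^ p := le_of_mul_le_mul_right h (two_zpow_pos e)
  have h3 : |n| ≤ 2 ^ p := by exact_mod_cast h1
  rcases lt_or_eq_of_le h3 with h4 | h4
  · exact ⟨n, e, by omega, rfl⟩
  · rcases abs_choice n with h5 | h5
    · refine ⟨1, p + e, by rw [abs_one]; omega, ?_⟩
      rw [two_zpow_natCast_add, ← h5, h4]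
      push_cast
      ring
    · refine ⟨-1, p + e, by rw [abs_neg, abs_one]; omega, ?_⟩
      have : n = -2 ^ p := by omega
      rw [two_zpow_natCast_add, this]
      push_cast
      ring

lemma isMul_of_mem {p : ℕ} {e : ℤ} {x : ℝ} (hx : x ∈ Fp p)
    (h : (2 : ℝ) ^ ((p : ℤ) - 1 + e) ≤ |x|) : IsMul e x := by
  obtain ⟨M, f, hM, rfl⟩ := hx
  have h1 : |(M : ℝ)| < (2 : ℝ) ^ p := by
    have : |M| < 2 ^ p := by omega
    exact_mod_cast this
  have h2 : (2 : ℝ) ^ ((p : ℤ) - 1 + e) < (2 : ℝ) ^ ((p : ℤ) + f) := by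
    rw [two_zpow_natCast_add]
    rw [abs_mul, abs_of_pos (two_zpow_pos f)] at h
    exact lt_of_le_of_lt h (mul_lt_mul_of_pos_right h1 (two_zpow_pos f))
  have h3 := le_of_two_zpow_lt h2
  exact IsMul.mono (by omega) ⟨M, rfl⟩

/-- Every nonzero real lies in a binade; `2 ^ e` is the spacing of `Fp p` there. -/
lemma exists_unit (p : ℕ) {x : ℝ} (hx : x ≠ 0) :
    ∃ e : ℤ, (2 : ℝ) ^ ((p : ℤ) - 1 + e) ≤ |x| ∧ |x| < (2 : ℝ) ^ ((p : ℤ) + e) := by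
  obtain ⟨n, h1, h2⟩ := exists_mem_Ico_zpow (abs_pos.2 hx) (by norm_num : (1 : ℝ) < 2)
  refine ⟨n - p + 1, ?_, ?_⟩
  · have h : (p : ℤ) - 1 + (n - p + 1) = n := by ring
    rwa [h]
  · have h : (p : ℤ) + (n - p + 1) = n + 1 := by ring
    rwa [h]

/-! ### Rounding toward minus infinity -/

lemma isGreatest_floor {p : ℕ} (hp : 1 ≤ p) {e : ℤ} {x : ℝ}
    (h1 : (2 : ℝ) ^ ((p : ℤ) - 1 + e) ≤ |x|) (h2 : |x| < (2 : ℝ) ^ ((p : ℤ) + e)) :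
    IsGreatest {f : ℝ | f ∈ Fp p ∧ f ≤ x} ((⌊x / (2 : ℝ) ^ e⌋ : ℝ) * (2 : ℝ) ^ e) := by
  have he := two_zpow_pos e
  have hle : (⌊x / (2 : ℝ) ^ e⌋ : ℝ) * (2 : ℝ) ^ e ≤ x :=
    (le_div_iff₀ he).1 (Int.floor_le _)
  -- the floor dominates every multiple of `2 ^ e` below `x`
  have key : ∀ y : ℝ, IsMul e y → y ≤ x → y ≤ (⌊x / (2 : ℝ) ^ e⌋ : ℝ) * (2 : ℝ) ^ e := by
    rintro y ⟨n, rfl⟩ hy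
    have : n ≤ ⌊x / (2 : ℝ) ^ e⌋ := Int.le_floor.2 ((le_div_iff₀ he).2 hy)
    have : (n : ℝ) ≤ (⌊x / (2 : ℝ) ^ e⌋ : ℝ) := by exact_mod_cast this
    exact mul_le_mul_of_nonneg_right this he.le
  refine ⟨⟨mem_of_isMul hp (e := e) ⟨_, rfl⟩ ?_, hle⟩, ?_⟩
  · rw [abs_lt] at h2
    refine abs_le.2 ⟨key _ (isMul_two_zpow (by omega)).neg h2.1.le, hle.trans h2.2.le⟩
  · rintro f ⟨hf, hfx⟩
    by_cases hfe : (2 : ℝ) ^ ((p : ℤ) - 1 + e) ≤ |f|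
    · exact key f (isMul_of_mem hf hfe) hfx
    · push Not at hfe
      have hf' := abs_lt.1 hfe
      rcases le_total 0 x with hx | hx
      · rw [abs_of_nonneg hx] at h1
        exact hf'.2.le.trans (key _ (isMul_two_zpow (by omega)) h1)
      · rw [abs_of_nonpos hx] at h1
        linarith

lemma RD_isGreatest {p : ℕ} (hp : 1 ≤ p) (x : ℝ) :
    IsGreatest {f : ℝ | f ∈ Fp p ∧ f ≤ x} (RD p x) := by
  have : ∃ a, IsGreatest {f : ℝ | f ∈ Fp p ∧ f ≤ x} a := by
    rcases eq_or_ne x 0 with rfl | hx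
    · exact ⟨0, ⟨zero_mem p, le_refl _⟩, fun f hf => hf.2⟩
    · obtain ⟨e, h1, h2⟩ := exists_unit p hx
      exact ⟨_, isGreatest_floor hp h1 h2⟩
  obtain ⟨a, ha⟩ := this
  rw [RD, ha.csSup_eq]
  exact ha

section RDfacts

variable {p : ℕ}

lemma RD_mem (hp : 1 ≤ p) (x : ℝ) : RD p x ∈ Fp p := (RD_isGreatest hp x).1.1

lemma RD_le (hp : 1 ≤ p) (x : ℝ) : RD p x ≤ x := (RD_isGreatest hp x).1.2

lemma le_RD (hp : 1 ≤ p) {f x : ℝ} (hf : f ∈ Fp p) (h : f ≤ x) : f ≤ RD p x :=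
  (RD_isGreatest hp x).2 ⟨hf, h⟩

lemma RD_eq (hp : 1 ≤ p) {x : ℝ} (hx : x ∈ Fp p) : RD p x = x :=
  le_antisymm (RD_le hp x) (le_RD hp hx le_rfl)

lemma RD_zero (hp : 1 ≤ p) : RD p 0 = 0 := RD_eq hp (zero_mem p)

/-- Within a binade, rounding down is rounding down to the grid of that binade. -/
lemma RD_unit (hp : 1 ≤ p) {e : ℤ} {x : ℝ}
    (h1 : (2 : ℝ) ^ ((p : ℤ) - 1 + e) ≤ |x|) (h2 : |x| < (2 : ℝ) ^ ((p : ℤ) + e)) :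
    IsMul e (RD p x) ∧ x - RD p x < (2 : ℝ) ^ e := by
  have he := two_zpow_pos e
  rw [RD, (isGreatest_floor hp h1 h2).csSup_eq]
  refine ⟨⟨_, rfl⟩, ?_⟩
  have := Int.lt_floor_add_one (x / (2 : ℝ) ^ e)
  rw [div_lt_iff₀ he] at this
  linarith

/-- Rounding does not lose divisibility by a power of two. -/
lemma RD_isMul (hp : 1 ≤ p) {e : ℤ} {x : ℝ} (hx : IsMul e x) : IsMul e (RD p x) := by
  by_cases h : |x| ≤ (2 : ℝ) ^ ((p : ℤ) + e)
  · rwa [RD_eq hp (mem_of_isMul hp hx h)]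
  · push Not at h
    have hx0 : x ≠ 0 := by
      rintro rfl
      rw [abs_zero] at h
      exact absurd h (not_lt.2 (two_zpow_pos _).le)
    obtain ⟨f, h1, h2⟩ := exists_unit p hx0
    have := le_of_two_zpow_lt (h.trans h2)
    exact (RD_unit hp h1 h2).1.mono (by omega)

/-- Rounding never crosses a floating-point number. -/
lemma le_abs_RD (hp : 1 ≤ p) {f x : ℝ} (hf : f ∈ Fp p) (h : f ≤ |x|) : f ≤ |RD p x| := by
  rcases le_total 0 x with hx | hx
  · rw [abs_of_nonneg hx] at h
    exact (le_RD hp hf h).trans (le_abs_self _)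
  · rw [abs_of_nonpos hx] at h
    exact (h.trans (neg_le_neg (RD_le hp x))).trans (neg_le_abs _)

lemma two_zpow_mem (hp : 1 ≤ p) (e : ℤ) : (2 : ℝ) ^ e ∈ Fp p :=
  mem_of_isMul hp (isMul_two_zpow le_rfl)
    (by rw [abs_of_pos (two_zpow_pos e)]; exact two_zpow_le (by omega))

lemma unit_eq (e : ℤ) : (2 : ℝ) ^ e = (2 : ℝ) ^ (1 - (p : ℤ)) * (2 : ℝ) ^ ((p : ℤ) - 1 + e) := by
  rw [← zpow_add₀ (by norm_num)]
  congr 1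
  ring

lemma RD_err (hp : 1 ≤ p) (x : ℝ) :
    |x - RD p x| ≤ (2 : ℝ) ^ (1 - (p : ℤ)) * |x| ∧
      |x - RD p x| ≤ (2 : ℝ) ^ (1 - (p : ℤ)) * |RD p x| := by
  rcases eq_or_ne x 0 with rfl | hx
  · simp [RD_zero hp]
  · obtain ⟨e, h1, h2⟩ := exists_unit p hx
    have h3 := (RD_unit hp h1 h2).2
    have h4 := le_abs_RD hp (two_zpow_mem hp _) h1
    rw [abs_of_nonneg (sub_nonneg.2 (RD_le hp x))]
    have hu := two_zpow_pos (1 - (p : ℤ))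
    rw [unit_eq (p := p) e] at h3
    exact ⟨h3.le.trans (mul_le_mul_of_nonneg_left h1 hu.le),
      h3.le.trans (mul_le_mul_of_nonneg_left h4 hu.le)⟩

end RDfacts

/-! ### Error-free steps and rounded error terms -/

section Sums

variable {p : ℕ}

/-- If `a` is a multiple of the spacing `2 ^ h` attached to `b`, the first subtraction of
`Fast2Sum(a, b)` is exact. The ordering `|b| ≤ |a|` is one way to guarantee the hypothesis. -/
lemma RD_add_sub_mem (hp : 2 ≤ p) {h : ℤ} {a b : ℝ} (ha : a ∈ Fp p) (hah : IsMul h a)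
    (hbh : IsMul h b) (hb : |b| < (2 : ℝ) ^ ((p : ℤ) + h)) : RD p (a + b) - a ∈ Fp p := by
  have hp1 : 1 ≤ p := by omega
  have hab := hah.add hbh
  by_cases hsmall : |a + b| ≤ (2 : ℝ) ^ ((p : ℤ) + h)
  · rw [RD_eq hp1 (mem_of_isMul hp1 hab hsmall), add_sub_cancel_left]
    exact mem_of_isMul hp1 hbh hb.le
  push Not at hsmall
  have h0 : a + b ≠ 0 := by
    intro h0
    rw [h0, abs_zero] at hsmall
    exact absurd hsmall (not_lt.2 (two_zpow_pos _).le)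
  obtain ⟨k, h1, h2⟩ := exists_unit p h0
  have hk : h < k := by
    have := le_of_two_zpow_lt (hsmall.trans h2)
    omega
  obtain ⟨hm, herr⟩ := RD_unit hp1 h1 h2
  have hle := RD_le hp1 (a + b)
  rcases (by omega : k = h + 1 ∨ h + 2 ≤ k) with rfl | hk2
  · -- the rounding error is a multiple of `2 ^ h` below `2 ^ (h + 1)`, hence at most `2 ^ h`
    have hsm : IsMul h (RD p (a + b)) := hm.mono (by omega)
    refine mem_of_isMul hp1 (hsm.sub hah) ?_
    have e1 : (2 : ℝ) ^ (h + 1) = 2 * 2 ^ h := by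
      rw [zpow_add₀ (by norm_num)]; norm_num; ring
    have g1 := (hab.sub hsm).gap (isMul_two_zpow (show h ≤ h + 1 by omega)) herr
    have g2 : |b| + (2 : ℝ) ^ h ≤ (2 : ℝ) ^ ((p : ℤ) + h) := by
      rcases abs_choice b with hb' | hb'
      · exact IsMul.gap (by rwa [hb']) (isMul_two_zpow (by omega)) hb
      · exact IsMul.gap (by rw [hb']; exact hbh.neg) (isMul_two_zpow (by omega)) hb
    have := abs_le.1 (le_refl |b|)
    refine abs_le.2 ⟨by linarith, by linarith [two_zpow_pos h]⟩
  · -- here `a` dominates, so it is a multiple of `2 ^ (k - 1)`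
    have e1 : (2 : ℝ) ^ ((p : ℤ) - 1 + k) = 2 * (2 : ℝ) ^ ((p : ℤ) - 1 + (k - 1)) := by
      rw [show (p : ℤ) - 1 + k = ((p : ℤ) - 1 + (k - 1)) + 1 by ring, zpow_add₀ (by norm_num)]
      norm_num; ring
    have e2 : (2 : ℝ) ^ ((p : ℤ) + (k - 1)) = 2 * (2 : ℝ) ^ ((p : ℤ) - 1 + (k - 1)) := by
      rw [← e1]; congr 1; ring
    have l1 : (2 : ℝ) ^ ((p : ℤ) + h) ≤ (2 : ℝ) ^ ((p : ℤ) - 1 + (k - 1)) :=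
      two_zpow_le (by omega)
    have l2 : (2 : ℝ) ^ k ≤ (2 : ℝ) ^ ((p : ℤ) - 1 + (k - 1)) := two_zpow_le (by omega)
    have ham : IsMul (k - 1) a := by
      refine isMul_of_mem ha ?_
      have := abs_add_le a b
      linarith
    refine mem_of_isMul hp1 ((hm.mono (by omega : k - 1 ≤ k)).sub ham) ?_
    have := abs_le.1 (le_refl |b|)
    refine abs_le.2 ⟨by linarith, by linarith⟩

/-- `Ordered p a b` says that `Fast2Sum(a, b)` is safe: `b` vanishes, or `a` is a multiple of a
spacing `2 ^ h` with respect to which `b` is a `p`-bit integer. -/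
def Ordered (p : ℕ) (a b : ℝ) : Prop :=
  b = 0 ∨ ∃ h : ℤ, IsMul h a ∧ IsMul h b ∧ |b| < (2 : ℝ) ^ ((p : ℤ) + h)

lemma ordered_of_abs_le {a b : ℝ} (ha : a ∈ Fp p) (hb : b ∈ Fp p) (h : |b| ≤ |a|) :
    Ordered p a b := by
  rcases eq_or_ne b 0 with hb0 | hb0
  · exact Or.inl hb0
  · obtain ⟨e, h1, h2⟩ := exists_unit p hb0
    exact Or.inr ⟨e, isMul_of_mem ha (h1.trans h), isMul_of_mem hb h1, h2⟩

lemma Ordered.sub_mem (hp : 2 ≤ p) {a b : ℝ} (ha : a ∈ Fp p) (h : Ordered p a b) :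
    RD p (a + b) - a ∈ Fp p := by
  rcases h with rfl | ⟨e, h1, h2, h3⟩
  · rw [add_zero, RD_eq (by omega) ha, sub_self]
    exact zero_mem p
  · exact RD_add_sub_mem hp ha h1 h2 h3

lemma fast2Sum_eq (hp : 2 ≤ p) {a b : ℝ} (ha : a ∈ Fp p) (h : Ordered p a b) :
    fast2Sum (RD p) a b = (RD p (a + b), RD p (a + b - RD p (a + b))) := by
  simp only [fast2Sum]
  rw [RD_eq (by omega) (h.sub_mem hp ha)]
  congr 2
  ring

/-- On nonnegative ordered inputs `Fast2Sum` with rounding down is error-free: the rounding error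
lies between `0` and `b` and is a multiple of the spacing of `b`, hence representable. -/
lemma fast2Sum_nonneg (hp : 2 ≤ p) {a b : ℝ} (ha : a ∈ Fp p) (hb : b ∈ Fp p) (h0 : 0 ≤ b)
    (hba : b ≤ a) : fast2Sum (RD p) a b = (RD p (a + b), a + b - RD p (a + b)) := by
  have hp1 : 1 ≤ p := by omega
  have hord : Ordered p a b :=
    ordered_of_abs_le ha hb (by rw [abs_of_nonneg h0, abs_of_nonneg (h0.trans hba)]; exact hba)
  rw [fast2Sum_eq hp ha hord]
  rcases hord with rfl | ⟨h, h1, h2, h3⟩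
  · rw [add_zero, RD_eq hp1 ha, sub_self, RD_zero hp1]
  · have hle := RD_le hp1 (a + b)
    have hge : a ≤ RD p (a + b) := le_RD hp1 ha (by linarith)
    rw [RD_eq hp1 (x := a + b - RD p (a + b))]
    refine mem_of_isMul hp1 ((h1.add h2).sub (RD_isMul hp1 (h1.add h2))) ?_
    rw [abs_of_nonneg (sub_nonneg.2 hle)]
    rw [abs_of_nonneg h0] at h3
    linarith

lemma twoSum_exact (hp : 1 ≤ p) {a b : ℝ} (ha : a ∈ Fp p) (hb : b ∈ Fp p) (h : a + b ∈ Fp p) :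
    twoSum (RD p) a b = (a + b, 0) := by
  simp [twoSum, RD_eq hp h, RD_eq hp ha, RD_eq hp hb, RD_zero hp]

lemma twoSum_isMul (hp : 1 ≤ p) {e : ℤ} {a b : ℝ} (ha : IsMul e a) (hb : IsMul e b) :
    IsMul e (twoSum (RD p) a b).2 := by
  simp only [twoSum]
  have hs := RD_isMul hp (ha.add hb)
  have ha' := RD_isMul hp (hs.sub hb)
  have hb' := RD_isMul hp (hs.sub ha')
  exact RD_isMul hp ((RD_isMul hp (ha.sub ha')).add (RD_isMul hp (hb.sub hb')))

/-- With directed rounding the second output of `2Sum` need not equal the rounding error of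
`a + b`; the defect is of second order in `u`. If `|a| ≤ |b|` only the last rounding matters;
otherwise `|b| ≤ |s|` (unless the sum is exact), so that `b' = s - a'` is exact and the errors of
the remaining four roundings add up. -/
lemma twoSum_err (hp : 2 ≤ p) {u : ℝ} (hu : u = (2 : ℝ) ^ (1 - (p : ℤ))) {a b : ℝ}
    (ha : a ∈ Fp p) (hb : b ∈ Fp p) :
    |(twoSum (RD p) a b).2 - (a + b - RD p (a + b))| ≤
      (6 * u ^ 2 + 5 * u ^ 3) * |RD p (a + b)| := by
  have hp1 : 1 ≤ p := by omega
  have hu0 : 0 < u := hu ▸ two_zpow_pos _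
  have herr : ∀ x, |x - RD p x| ≤ u * |x| := fun x => hu ▸ (RD_err hp1 x).1
  by_cases hex : a + b ∈ Fp p
  · rw [twoSum_exact hp1 ha hb hex, RD_eq hp1 hex]
    simp only [sub_self, abs_zero]
    positivity
  have hs1 : |a + b - RD p (a + b)| ≤ u * |RD p (a + b)| := hu ▸ (RD_err hp1 (a + b)).2
  simp only [twoSum]
  set s := RD p (a + b) with hs
  have hsF : s ∈ Fp p := RD_mem hp1 _
  rcases le_total |a| |b| with hab | hab
  · -- `s - b` and then `b` are exact, so the output is the rounded error
    have h1 : s - b ∈ Fp p := by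
      have := (ordered_of_abs_le hb ha hab).sub_mem hp hb
      rwa [add_comm b a] at this
    rw [RD_eq hp1 h1, sub_sub_cancel, RD_eq hp1 hb, sub_self, RD_zero hp1, add_zero,
      RD_eq hp1 (RD_mem hp1 _), show a - (s - b) = a + b - s by ring, abs_sub_comm]
    calc _ ≤ u * |a + b - s| := herr _
      _ ≤ u * (u * |s|) := by gcongr
      _ ≤ _ := by nlinarith [abs_nonneg s, mul_nonneg (pow_nonneg hu0.le 2) (abs_nonneg s),
                    mul_nonneg (pow_nonneg hu0.le 3) (abs_nonneg s)]
  · have hbs : |b| ≤ |s| := by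
      by_contra hlt
      push Not at hlt
      -- then `a + b` is a multiple of the spacing of `b` and too small to be inexact
      have hsmall : |a + b| < |b| := by
        by_contra h
        push Not at h
        have hbF : |b| ∈ Fp p := by
          rcases abs_choice b with h' | h' <;> rw [h']
          exacts [hb, neg_mem hb]
        exact absurd (le_abs_RD hp1 hbF h) (not_le.2 hlt)
      have hb0 : b ≠ 0 := by
        rintro rfl
        simp at hlt
        exact absurd hlt (not_lt.2 (abs_nonneg s))
      obtain ⟨e, h1, h2⟩ := exists_unit p hb0
      exact hex (mem_of_isMul hp1 ((isMul_of_mem ha (h1.trans hab)).add (isMul_of_mem hb h1))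
        (hsmall.trans h2).le)
    have h1 : s - RD p (s - b) ∈ Fp p := by
      have := (ordered_of_abs_le hsF (neg_mem hb) (by rwa [abs_neg])).sub_mem hp hsF
      have := neg_mem this
      rwa [neg_sub, ← sub_eq_add_neg] at this
    rw [RD_eq hp1 h1]
    have e2 := herr (s - b)
    set a' := RD p (s - b)
    have e4 := herr (a - a')
    have e5 := herr (b - (s - a'))
    set δa := RD p (a - a')
    set δb := RD p (b - (s - a'))
    have e6 := herr (δa + δb)
    set t := RD p (δa + δb)
    have l2 : |s - b - a'| ≤ 2 * u * |s| := by
      have : |s - b| ≤ |s| + |b| := abs_sub _ _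
      nlinarith
    have l4 : |a - a'| ≤ 3 * u * |s| := by
      have : a - a' = (a + b - s) + (s - b - a') := by ring
      rw [this]
      have := abs_add_le (a + b - s) (s - b - a')
      linarith
    have l5 : |b - (s - a')| ≤ 2 * u * |s| := by
      rwa [show b - (s - a') = -(s - b - a') by ring, abs_neg]
    have m4 : |a - a' - δa| ≤ 3 * (u ^ 2 * |s|) := by nlinarith
    have m5 : |b - (s - a') - δb| ≤ 2 * (u ^ 2 * |s|) := by nlinarith
    have m6 : |δa + δb - (a + b - s)| ≤ 5 * (u ^ 2 * |s|) := by
      have : δa + δb - (a + b - s) = -((a - a' - δa) + (b - (s - a') - δb)) := by ring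
      rw [this, abs_neg]
      have := abs_add_le (a - a' - δa) (b - (s - a') - δb)
      linarith
    have m7 : |δa + δb| ≤ u * |s| + 5 * (u ^ 2 * |s|) := by
      have := abs_add_le (δa + δb - (a + b - s)) (a + b - s)
      rw [sub_add_cancel] at this
      linarith
    have m8 : |δa + δb - t| ≤ u ^ 2 * |s| + 5 * (u ^ 3 * |s|) := by nlinarith
    have : t - (a + b - s) = (δa + δb - (a + b - s)) - (δa + δb - t) := by ring
    rw [this]
    have := abs_sub (δa + δb - (a + b - s)) (δa + δb - t)
    linarith

/-- The four possibilities for the rounding error of `s_l + t_h`, where `s_l` is a multiple of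
`2 ^ g`: only in the second one can the error be as large as `u * |t_h|`, and then the sum
is at least `2 ^ (p + g)`. -/
lemma RD_add_cases (hp : 1 ≤ p) {u : ℝ} (hu : u = (2 : ℝ) ^ (1 - (p : ℤ))) {g : ℤ} {s t : ℝ}
    (hs : IsMul g s) (ht : t ∈ Fp p) :
    RD p (s + t) = s + t ∨
    ((2 : ℝ) ^ ((p : ℤ) + g) ≤ |s + t| ∧ |s + t - RD p (s + t)| ≤ u * |s + t|) ∨
    |s + t - RD p (s + t)| ≤ 2 * u * |s| ∨
    |s + t - RD p (s + t)| ≤ u / 2 * |s + t| := by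
  have hu0 : 0 < u := hu ▸ two_zpow_pos _
  have herr : |s + t - RD p (s + t)| ≤ u * |s + t| := hu ▸ (RD_err hp (s + t)).1
  rcases eq_or_ne t 0 with rfl | ht0
  · right; right; left
    rw [add_zero] at herr ⊢
    nlinarith [mul_nonneg hu0.le (abs_nonneg s)]
  obtain ⟨h, h1, h2⟩ := exists_unit p ht0
  have htm := isMul_of_mem ht h1
  rcases le_or_gt g h with hgh | hgh
  · have hm := hs.add (htm.mono hgh)
    rcases le_or_gt |s + t| ((2 : ℝ) ^ ((p : ℤ) + g)) with hle | hgt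
    · exact Or.inl (RD_eq hp (mem_of_isMul hp hm hle))
    · exact Or.inr (Or.inl ⟨hgt.le, herr⟩)
  · have hm := (hs.mono hgh.le).add htm
    rcases le_or_gt |s + t| ((2 : ℝ) ^ ((p : ℤ) + h)) with hle | hgt
    · exact Or.inl (RD_eq hp (mem_of_isMul hp hm hle))
    right; right
    have htri := abs_add_le s t
    rcases le_or_gt ((2 : ℝ) ^ ((p : ℤ) + h)) |s| with hle | hsl
    · left
      calc _ ≤ u * |s + t| := herr
        _ ≤ u * (2 * |s|) := by gcongr; linarith
        _ = _ := by ring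
    · right
      -- the sum sits in the binade just above that of `t`, and is a multiple of half its spacing
      have e1 : (2 : ℝ) ^ ((p : ℤ) + (h + 1)) = 2 * (2 : ℝ) ^ ((p : ℤ) + h) := by
        rw [← add_assoc, zpow_add₀ (by norm_num)]; norm_num; ring
      have e2 : (2 : ℝ) ^ (h + 1) = 2 * (2 : ℝ) ^ h := by
        rw [zpow_add₀ (by norm_num)]; norm_num; ring
      have e3 : (p : ℤ) - 1 + (h + 1) = p + h := by ring
      obtain ⟨k1, k2⟩ := RD_unit hp (e := h + 1) (x := s + t) (by rw [e3]; exact hgt.le)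
        (by rw [e1]; linarith)
      have := (hm.sub (k1.mono (by omega : h ≤ h + 1))).gap
        (isMul_two_zpow (by omega : h ≤ h + 1)) k2
      rw [abs_of_nonneg (sub_nonneg.2 (RD_le hp _))]
      have e4 : (2 : ℝ) ^ (h + 1) = u * (2 : ℝ) ^ ((p : ℤ) + h) := by
        rw [hu, ← zpow_add₀ (by norm_num)]; congr 1; ring
      have : u * (2 : ℝ) ^ ((p : ℤ) + h) ≤ u * |s + t| := by gcongr
      linarith

/-- The last two steps of the algorithm, `A` standing for `s_h + c`. -/
lemma tail_err (hp : 6 ≤ p) {u : ℝ} (hu : u = (2 : ℝ) ^ (1 - (p : ℤ))) (hu32 : u ≤ 1 / 32)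
    {A tl : ℝ} (htl : |tl| ≤ |A| / 4) :
    let v := RD p A
    let w := RD p (tl + RD p (A - v))
    |(fast2Sum (RD p) v w).1 + (fast2Sum (RD p) v w).2 - (A + tl)| ≤
      (3 * u ^ 2 + 8 * u ^ 3) * |A| + 3 * u * |tl| := by
  intro v w
  have hp1 : 1 ≤ p := by omega
  have hu0 : 0 < u := hu ▸ two_zpow_pos _
  have herr : ∀ x, |x - RD p x| ≤ u * |x| := fun x => hu ▸ (RD_err hp1 x).1
  have hab : ∀ x, |RD p x| ≤ |x| + |x - RD p x| := fun x => by
    have := abs_sub x (x - RD p x)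
    rwa [sub_sub_cancel] at this
  have hA := abs_nonneg A
  have ht0 := abs_nonneg tl
  have e1 : |A - v| ≤ u * |A| := herr A
  have a1 : |v| ≤ |A| + |A - v| := hab A
  have b1 : |A| ≤ |v| + |A - v| := by
    have := abs_add_le v (A - v)
    rwa [add_sub_cancel] at this
  have e2 : |A - v - RD p (A - v)| ≤ u * |A - v| := herr _
  have a2 : |RD p (A - v)| ≤ |A - v| + |A - v - RD p (A - v)| := hab _
  set l := RD p (A - v)
  have e3 : |tl + l - w| ≤ u * |tl + l| := herr _
  have a3 : |w| ≤ |tl + l| + |tl + l - w| := hab _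
  have c3 := abs_add_le tl l
  have q2 : |A - v - l| ≤ u ^ 2 * |A| := by
    have := mul_le_mul_of_nonneg_left e1 hu0.le
    linarith
  have uA : 0 ≤ u * |A| := by positivity
  have uA2 : 0 ≤ u ^ 2 * |A| := by positivity
  have uA3 : 0 ≤ u ^ 3 * |A| := by positivity
  have ut : 0 ≤ u * |tl| := by positivity
  have s1 : u * |A| ≤ 1 / 32 * |A| := by gcongr
  have s2 : u ^ 2 * |A| ≤ 1 / 32 * (u * |A|) := by
    rw [pow_succ', mul_assoc, pow_one]; gcongr
  have s3 : u ^ 3 * |A| ≤ 1 / 32 * (u ^ 2 * |A|) := by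
    rw [pow_succ', mul_assoc]; gcongr
  have st : u * |tl| ≤ 1 / 32 * |tl| := by gcongr
  have st2 : u * (u * |tl|) ≤ 1 / 32 * (u * |tl|) := by gcongr
  have q3 : |tl + l| ≤ |tl| + u * |A| + u ^ 2 * |A| := by linarith
  have q4 : |tl + l - w| ≤ u * |tl| + u ^ 2 * |A| + u ^ 3 * |A| := by
    have : u * |tl + l| ≤ u * (|tl| + u * |A| + u ^ 2 * |A|) := by gcongr
    linarith
  have q5 : |w| ≤ |tl| + u * |tl| + u * |A| + 2 * (u ^ 2 * |A|) + u ^ 3 * |A| := by linarith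
  have hwv : |w| ≤ |v| := by linarith
  rw [fast2Sum_eq (by omega) (RD_mem hp1 _)
    (ordered_of_abs_le (RD_mem hp1 _) (RD_mem hp1 _) hwv)]
  show |RD p (v + w) + RD p (v + w - RD p (v + w)) - (A + tl)| ≤ _
  have e4 := herr (v + w)
  have e5 := herr (v + w - RD p (v + w))
  set z := RD p (v + w)
  set z' := RD p (v + w - z)
  have c4 := abs_add_le v w
  have q6 : |v + w| ≤ |A| + 2 * (u * |A|) + 2 * (u ^ 2 * |A|) + u ^ 3 * |A| + |tl| + u * |tl| := by
    linarith
  have q7 : |v + w - z - z'| ≤ u * (u * |v + w|) :=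
    e5.trans (mul_le_mul_of_nonneg_left e4 hu0.le)
  have q8 : u * (u * |v + w|) ≤ u * (u * (|A| + 2 * (u * |A|) + 2 * (u ^ 2 * |A|) + u ^ 3 * |A|
      + |tl| + u * |tl|)) := by gcongr
  have q9 : u * (u ^ 3 * |A|) ≤ 1 / 32 * (u ^ 3 * |A|) := by gcongr
  have q10 : u * (u * (u ^ 3 * |A|)) ≤ 1 / 32 * (1 / 32 * (u ^ 3 * |A|)) := by gcongr
  have q11 : u * (u * (u * |tl|)) ≤ 1 / 32 * (1 / 32 * (u * |tl|)) := by gcongr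
  have : z + z' - (A + tl) = -((v + w - z - z') + (A - v - l) + (tl + l - w)) := by ring
  rw [this, abs_neg]
  have t1 := abs_add_le ((v + w - z - z') + (A - v - l)) (tl + l - w)
  have t2 := abs_add_le (v + w - z - z') (A - v - l)
  linarith

end Sums

/-! ### Reduction of rounding up to rounding down -/

lemma RU_eq_neg_RD (p : ℕ) (x : ℝ) : RU p x = -RD p (-x) := by
  rw [RU, RD, Real.sInf_def]
  congr 2
  ext f
  simp only [Set.mem_neg, Set.mem_ofPred_eq]
  constructor
  · rintro ⟨h1, h2⟩
    exact ⟨by simpa using neg_mem h1, by linarith⟩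
  · rintro ⟨h1, h2⟩
    exact ⟨neg_mem h1, by linarith⟩

lemma fast2Sum_RU (p : ℕ) (a b : ℝ) :
    fast2Sum (RU p) a b = -fast2Sum (RD p) (-a) (-b) := by
  simp only [fast2Sum, RU_eq_neg_RD, Prod.neg_mk]
  ring_nf

lemma twoSum_RU (p : ℕ) (a b : ℝ) :
    twoSum (RU p) a b = -twoSum (RD p) (-a) (-b) := by
  simp only [twoSum, RU_eq_neg_RD, Prod.neg_mk]
  ring_nf

lemma modAccurateAdd_RU (p : ℕ) (xh xl yh yl : ℝ) :
    modAccurateAdd (RU p) xh xl yh yl = -modAccurateAdd (RD p) (-xh) (-xl) (-yh) (-yl) := by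
  have ht : (if |yl| ≤ |xl| then fast2Sum (RU p) xl yl else fast2Sum (RU p) yl xl) =
      -(if |-yl| ≤ |-xl| then fast2Sum (RD p) (-xl) (-yl) else fast2Sum (RD p) (-yl) (-xl)) := by
    rw [abs_neg, abs_neg]
    split_ifs <;> exact fast2Sum_RU ..
  simp only [modAccurateAdd]
  rw [ht, twoSum_RU]
  simp only [fast2Sum_RU, RU_eq_neg_RD, Prod.fst_neg, Prod.snd_neg, neg_add, neg_neg]

/-! ### The two regimes for rounding down -/

lemma modAccurateAdd_RD {p : ℕ} (hp : 2 ≤ p) {xh xl yh yl : ℝ} (hxl : xl ∈ Fp p)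
    (hyl : yl ∈ Fp p) (hx0 : 0 ≤ xl) (hy0 : 0 ≤ yl) :
    xl + yl - RD p (xl + yl) ∈ Fp p ∧
    modAccurateAdd (RD p) xh xl yh yl =
      let s := twoSum (RD p) xh yh
      let c := RD p (s.2 + RD p (xl + yl))
      let v := fast2Sum (RD p) s.1 c
      let w := RD p (xl + yl - RD p (xl + yl) + v.2)
      fast2Sum (RD p) v.1 w := by
  have key : ∀ a b : ℝ, a ∈ Fp p → b ∈ Fp p → 0 ≤ b → b ≤ a →
      a + b - RD p (a + b) ∈ Fp p := by
    intro a b ha hb h0 hba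
    have h1 := fast2Sum_nonneg hp ha hb h0 hba
    have h2 : (fast2Sum (RD p) a b).2 ∈ Fp p := RD_mem (by omega) _
    rwa [h1] at h2
  simp only [modAccurateAdd]
  rw [abs_of_nonneg hx0, abs_of_nonneg hy0]
  split_ifs with h
  · rw [fast2Sum_nonneg hp hxl hyl hy0 h]
    exact ⟨key _ _ hxl hyl hy0 h, rfl⟩
  · have h' := (not_le.1 h).le
    rw [fast2Sum_nonneg hp hyl hxl hx0 h', add_comm yl xl]
    refine ⟨?_, rfl⟩
    rw [add_comm xl yl]
    exact key _ _ hyl hxl hx0 h'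

/-- The regime of cancellation, where `x_h + y_h = sh` is computed exactly. By `hmul`, `sh` is
a multiple of the spacing `2 ^ h` of the binade of `T`. Hence `sh + RD p T` is either exact, or so
large that the part `T - RD p T < 2 ^ h` is negligible relative to it. -/
lemma cancel_err {p : ℕ} (hp : 6 ≤ p) {u : ℝ} (hu : u = (2 : ℝ) ^ (1 - (p : ℤ)))
    (hu32 : u ≤ 1 / 32) {sh T : ℝ} (hsh : sh ∈ Fp p) (hT : 0 ≤ T) (htl : T - RD p T ∈ Fp p)
    (hmul : ∀ h : ℤ, (2 : ℝ) ^ ((p : ℤ) - 1 + h) ≤ T → IsMul h sh) :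
    let v := fast2Sum (RD p) sh (RD p T)
    let w := RD p (T - RD p T + v.2)
    |(fast2Sum (RD p) v.1 w).1 + (fast2Sum (RD p) v.1 w).2 - (sh + T)| ≤
      15 * u ^ 2 * |sh + T| := by
  have hp1 : 1 ≤ p := by omega
  have hp2 : 2 ≤ p := by omega
  have hu0 : 0 < u := hu ▸ two_zpow_pos _
  have herr : ∀ x, |x - RD p x| ≤ u * |x| := fun x => hu ▸ (RD_err hp1 x).1
  intro v w
  rcases hT.eq_or_lt with rfl | hTpos
  · have hv : v = (sh, 0) := by
      simp [v, RD_zero hp1, fast2Sum, RD_eq hp1 hsh]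
    have hw : w = 0 := by simp [w, hv, RD_zero hp1]
    rw [hw, hv]
    simp only [fast2Sum, add_zero, RD_eq hp1 hsh, sub_self, RD_zero hp1, abs_zero]
    positivity
  obtain ⟨h, h1, h2⟩ := exists_unit p hTpos.ne'
  obtain ⟨k1, k2⟩ := RD_unit hp1 h1 h2
  rw [abs_of_nonneg hT] at h1 h2
  have hth0 : (2 : ℝ) ^ ((p : ℤ) - 1 + h) ≤ RD p T := le_RD hp1 (two_zpow_mem hp1 _) h1
  have hthT := RD_le hp1 T
  have hsm := hmul h h1
  have hth : |RD p T| < (2 : ℝ) ^ ((p : ℤ) + h) := by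
    rw [abs_of_nonneg ((two_zpow_pos _).le.trans hth0)]
    linarith
  have hv : v = (RD p (sh + RD p T), RD p (sh + RD p T - RD p (sh + RD p T))) :=
    fast2Sum_eq hp2 hsh (Or.inr ⟨h, hsm, k1, hth⟩)
  have hAm := hsm.add k1
  have hS : sh + T = (sh + RD p T) + (T - RD p T) := by ring
  rw [hS]
  set A := sh + RD p T
  have htl0 : 0 ≤ T - RD p T := by linarith
  set tl := T - RD p T
  rcases le_or_gt |A| ((2 : ℝ) ^ ((p : ℤ) + h)) with hle | hgt
  · have hAF := mem_of_isMul hp1 hAm hle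
    rw [RD_eq hp1 hAF, sub_self, RD_zero hp1] at hv
    have hw : w = tl := by
      simp only [w, hv, add_zero]
      exact RD_eq hp1 htl
    have hord : Ordered p A tl := by
      rcases eq_or_ne tl 0 with h0 | h0
      · exact Or.inl h0
      · obtain ⟨k, l1, l2⟩ := exists_unit p h0
        refine Or.inr ⟨k, hAm.mono ?_, isMul_of_mem htl l1, l2⟩
        rw [abs_of_nonneg htl0] at l1
        have := le_of_two_zpow_lt (l1.trans_lt k2)
        omega
    rw [hw, hv, fast2Sum_eq hp2 hAF hord]
    show |RD p (A + tl) + RD p (A + tl - RD p (A + tl)) - (A + tl)| ≤ _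
    have e1 := herr (A + tl)
    have e2 := herr (A + tl - RD p (A + tl))
    rw [abs_sub_comm, ← sub_sub]
    calc _ ≤ u * |A + tl - RD p (A + tl)| := e2
      _ ≤ u * (u * |A + tl|) := by gcongr
      _ ≤ _ := by nlinarith [mul_nonneg (pow_nonneg hu0.le 2) (abs_nonneg (A + tl))]
  · have htlA : |tl| ≤ u / 2 * |A| := by
      have e1 : (2 : ℝ) ^ (h + 1) = 2 * (2 : ℝ) ^ h := by
        rw [zpow_add₀ (by norm_num)]; norm_num; ring
      have e4 : (2 : ℝ) ^ (h + 1) = u * (2 : ℝ) ^ ((p : ℤ) + h) := by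
        rw [hu, ← zpow_add₀ (by norm_num)]; congr 1; ring
      have : u * (2 : ℝ) ^ ((p : ℤ) + h) ≤ u * |A| := by gcongr
      rw [abs_of_nonneg htl0]
      linarith
    have uA : u * |A| ≤ 1 / 32 * |A| := by gcongr
    have hA := abs_nonneg A
    have main := tail_err hp hu hu32 (A := A) (tl := tl) (by linarith)
    have hw : w = RD p (tl + RD p (A - RD p A)) := by
      simp only [w, hv]
      rfl
    rw [hw, hv]
    refine main.trans ?_
    have hAS : |A| ≤ 64 / 63 * |A + tl| := by
      have := abs_sub (A + tl) tl
      rw [add_sub_cancel_right] at this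
      linarith
    have r1 : u * |tl| ≤ u * (u / 2 * |A|) := by gcongr
    have r2 : u ^ 2 * (u * |A|) ≤ u ^ 2 * (1 / 32 * |A|) := by gcongr
    have r3 : u ^ 2 * |A| ≤ u ^ 2 * (64 / 63 * |A + tl|) := by gcongr
    have r4 : 0 ≤ u ^ 2 * |A + tl| := by positivity
    linarith

/-- The arithmetic collecting the error contributions when `|x_h| + |y_h| ≤ 3 |x_h + y_h|`.
Here `N = |x_h + y_h|`, `W = |x_h| + |y_h|`, `s = |S|`, `q = o u`, `δ` is the defect of the second
output of `2Sum`, `ε` the rounding error of `c`, and `A = |s_h + c|`. -/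
lemma collect {u q N W s th tl sl δ ε A E : ℝ} (hu0 : 0 < u) (hu32 : u ≤ 1 / 32) (hq0 : 0 ≤ q)
    (hq : q ≤ 1 / 8) (hs : 0 ≤ s) (hN0 : 0 ≤ N)
    (hNs : N ≤ s + q * W) (hWN : W ≤ 3 * N) (hth : th ≤ q * W) (htl : tl ≤ u * th)
    (hδ : δ ≤ 6 * (u ^ 2 * N) + 12 * (u ^ 3 * N)) (hsl : sl ≤ u * N + δ)
    (hε : ε ≤ u * sl + u * th ∧ W ≤ 3 * s ∨ ε ≤ 2 * u * sl ∨ ε ≤ u / 2 * (sl + th))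
    (hA : A ≤ s + tl + δ + ε)
    (hE : E ≤ δ + ε + ((3 * u ^ 2 + 8 * u ^ 3) * A + 3 * u * tl)) :
    E ≤ (3 * (q * u) + 15 * u ^ 2 + 1000 * (u ^ 3 + u ^ 2 * q)) * s := by
  have w1 : q * W ≤ q * (3 * N) := by gcongr
  have w2 : q * (3 * N) ≤ 1 / 8 * (3 * N) := by gcongr
  have n1 : N ≤ 8 / 5 * s := by linarith
  have w3 : q * (3 * N) ≤ q * (3 * (8 / 5 * s)) := by gcongr
  have qs0 : 0 ≤ q * s := by positivity
  have n2 : N ≤ s + 5 * (q * s) := by linarith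
  have X0 : 0 ≤ u ^ 2 * s := by positivity
  have Y0 : 0 ≤ u ^ 3 * s := by positivity
  have Z0 : 0 ≤ u ^ 2 * q * s := by positivity
  have us0 : 0 ≤ u * s := by positivity
  have x1 : u ^ 2 * N ≤ u ^ 2 * (s + 5 * (q * s)) := by gcongr
  have y1 : u ^ 3 * N ≤ u ^ 3 * (8 / 5 * s) := by gcongr
  have d1 : δ ≤ 6 * (u ^ 2 * s) + 30 * (u ^ 2 * q * s) + 20 * (u ^ 3 * s) := by linarith
  have t1 : u * th ≤ u * (q * (3 * (8 / 5 * s))) := by gcongr; linarith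
  -- powers of `u` in terms of lower ones
  have p1 : u * (u * s) ≤ 1 / 32 * (u * s) := by gcongr
  have p2 : u * (u ^ 2 * s) ≤ 1 / 32 * (u ^ 2 * s) := by gcongr
  have p3 : q * (u * s) ≤ 1 / 8 * (u * s) := by gcongr
  have p4 : q * (u ^ 2 * s) ≤ 1 / 8 * (u ^ 2 * s) := by gcongr
  have p5 : u * (u ^ 2 * q * s) ≤ 1 / 32 * (u ^ 2 * q * s) := by gcongr
  have p6 : u * (u ^ 3 * s) ≤ 1 / 32 * (u ^ 3 * s) := by gcongr
  have usl : u * sl ≤ u * (u * N + δ) := by gcongr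
  have udl : u * δ ≤ u * (6 * (u ^ 2 * s) + 30 * (u ^ 2 * q * s) + 20 * (u ^ 3 * s)) := by gcongr
  have sl1 : u * sl ≤ u ^ 2 * s + 8 * (u ^ 2 * q * s) + 10 * (u ^ 3 * s) := by linarith
  have e1 : ε ≤ 3 * (q * u * s) + 2 * (u ^ 2 * s) + 16 * (u ^ 2 * q * s) + 20 * (u ^ 3 * s) := by
    have quS : 0 ≤ q * u * s := by positivity
    rcases hε with ⟨h1, h2⟩ | h1 | h1
    · have : u * th ≤ u * (q * (3 * s)) := by
        have : q * W ≤ q * (3 * s) := by gcongr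
        gcongr
        linarith
      linarith
    · linarith
    · linarith
  have a1 : A ≤ s + 4 * (u * s) := by linarith
  have a2 : u ^ 2 * A ≤ u ^ 2 * (s + 4 * (u * s)) := by gcongr
  have a3 : u ^ 3 * A ≤ u ^ 3 * (s + 4 * (u * s)) := by gcongr
  have a4 : u * tl ≤ u * (u * (q * (3 * (8 / 5 * s)))) := by gcongr; linarith
  linarith

/-- The regime without cancellation. The rounding error of `c` reaches `u * t_h` only when
`|s_l + t_h| ≥ min |x_h| |y_h|`; this forces `|x_h| + |y_h| ≤ 3 |S|`, whence the constant `3 o`. -/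
lemma spread_err {p : ℕ} (hp : 6 ≤ p) {u q : ℝ} (hu : u = (2 : ℝ) ^ (1 - (p : ℤ)))
    (hu32 : u ≤ 1 / 32) (hq0 : 0 ≤ q) (hq : q ≤ 1 / 8 - 2 * u) {xh yh T : ℝ}
    (hxh : xh ∈ Fp p) (hyh : yh ∈ Fp p) (hT : 0 ≤ T) (hTq : T ≤ q * (|xh| + |yh|))
    (hW : |xh| + |yh| ≤ 3 * |xh + yh|) :
    let s := twoSum (RD p) xh yh
    let c := RD p (s.2 + RD p T)
    let v := fast2Sum (RD p) s.1 c
    let w := RD p (T - RD p T + v.2)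
    |(fast2Sum (RD p) v.1 w).1 + (fast2Sum (RD p) v.1 w).2 - (xh + yh + T)| ≤
      (3 * (q * u) + 15 * u ^ 2 + 1000 * (u ^ 3 + u ^ 2 * q)) * |xh + yh + T| := by
  have hp1 : 1 ≤ p := by omega
  have hp2 : 2 ≤ p := by omega
  have hu0 : 0 < u := hu ▸ two_zpow_pos _
  have herr : ∀ x, |x - RD p x| ≤ u * |x| := fun x => hu ▸ (RD_err hp1 x).1
  have herr' : ∀ x, |x - RD p x| ≤ u * |RD p x| := fun x => hu ▸ (RD_err hp1 x).2
  intro s c v w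
  have hs1 : s.1 = RD p (xh + yh) := rfl
  have hdef := twoSum_err hp2 hu hxh hyh
  have hth0 : 0 ≤ RD p T := le_RD hp1 (zero_mem p) hT
  have hthT := RD_le hp1 T
  have htl0 : 0 ≤ T - RD p T := by linarith
  have htl : T - RD p T ≤ u * RD p T := by
    have := herr' T
    rwa [abs_of_nonneg htl0, abs_of_nonneg hth0] at this
  have he := herr (xh + yh)
  have hsh : |s.1| ≤ |xh + yh| + u * |xh + yh| := by
    have := abs_sub (xh + yh) (xh + yh - RD p (xh + yh))
    rw [sub_sub_cancel] at this
    rw [hs1]; linarith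
  have hsh' : |xh + yh| ≤ |s.1| + u * |xh + yh| := by
    have := abs_add_le (RD p (xh + yh)) (xh + yh - RD p (xh + yh))
    rw [add_sub_cancel] at this
    rw [hs1]; linarith
  have hW0 : |xh + yh| ≤ |xh| + |yh| := abs_add_le _ _
  have hdist : |xh| + |yh| ≤ |xh + yh| + 2 * min |xh| |yh| := by
    rcases min_cases |xh| |yh| with ⟨h1, h2⟩ | ⟨h1, h2⟩ <;> rw [h1]
    · have := abs_sub (xh + yh) xh
      rw [add_sub_cancel_left] at this
      linarith
    · have := abs_sub (xh + yh) yh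
      rw [add_sub_cancel_right] at this
      linarith
  have hS : |xh + yh| ≤ |xh + yh + T| + T := by
    have := abs_sub (xh + yh + T) T
    rw [add_sub_cancel_right, abs_of_nonneg hT] at this
    exact this
  -- the trichotomy for the rounding error of `c`
  have hc : |s.2 + RD p T - c| ≤ u * |s.2 + RD p T| ∧ min |xh| |yh| ≤ |s.2 + RD p T| ∨
      |s.2 + RD p T - c| ≤ 2 * u * |s.2| ∨ |s.2 + RD p T - c| ≤ u / 2 * |s.2 + RD p T| := by
    have hexact : c = s.2 + RD p T → |s.2 + RD p T - c| ≤ 2 * u * |s.2| := by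
      intro h
      rw [h, sub_self, abs_zero]
      positivity
    by_cases hm0 : min |xh| |yh| = 0
    · refine Or.inr (Or.inl (hexact ?_))
      have hF : xh + yh ∈ Fp p := by
        rcases min_choice |xh| |yh| with h | h <;> rw [h, abs_eq_zero] at hm0 <;>
          simpa [hm0] using by assumption
      have : s = (xh + yh, 0) := twoSum_exact hp1 hxh hyh hF
      simp only [c, this, zero_add]
      rw [RD_eq hp1 (RD_mem hp1 _)]
    · obtain ⟨g, g1, g2⟩ := exists_unit p hm0
      have hmn : 0 ≤ min |xh| |yh| := le_min (abs_nonneg _) (abs_nonneg _)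
      rw [abs_of_nonneg hmn] at g1 g2
      have hsm : IsMul g s.2 := twoSum_isMul hp1
        (isMul_of_mem hxh (g1.trans (min_le_left _ _)))
        (isMul_of_mem hyh (g1.trans (min_le_right _ _)))
      rcases RD_add_cases hp1 hu hsm (RD_mem hp1 T) with h | ⟨h, h'⟩ | h | h
      · exact Or.inr (Or.inl (hexact h))
      · exact Or.inl ⟨h', g2.le.trans h⟩
      · exact Or.inr (Or.inl h)
      · exact Or.inr (Or.inr h)
  have hcF : c ∈ Fp p := RD_mem hp1 _
  have hcerr : |s.2 + RD p T - c| ≤ u * |s.2 + RD p T| := herr _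
  have hsF : s.1 ∈ Fp p := RD_mem hp1 _
  set N := |xh + yh| with hN
  have hN0 : 0 ≤ N := abs_nonneg _
  have uN0 : 0 ≤ u * N := by positivity
  have uN1 : u * N ≤ 1 / 32 * N := by gcongr
  have uN2 : u ^ 2 * N ≤ 1 / 32 * (u * N) := by
    rw [pow_succ', mul_assoc, pow_one]; gcongr
  have uN3 : u ^ 3 * N ≤ 1 / 32 * (u ^ 2 * N) := by
    rw [pow_succ', mul_assoc]; gcongr
  have uN4 : u ^ 4 * N ≤ 1 / 32 * (u ^ 3 * N) := by
    rw [pow_succ', mul_assoc]; gcongr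
  have uN20 : 0 ≤ u ^ 2 * N := by positivity
  have uN30 : 0 ≤ u ^ 3 * N := by positivity
  have hδ : |s.2 - (xh + yh - s.1)| ≤ 6 * (u ^ 2 * N) + 12 * (u ^ 3 * N) := by
    have : (6 * u ^ 2 + 5 * u ^ 3) * |s.1| ≤ (6 * u ^ 2 + 5 * u ^ 3) * (N + u * N) := by gcongr
    have h2 : |s.2 - (xh + yh - s.1)| ≤ (6 * u ^ 2 + 5 * u ^ 3) * |s.1| := hdef
    linarith
  have hsl : |s.2| ≤ u * N + |s.2 - (xh + yh - s.1)| := by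
    have := abs_add_le (s.2 - (xh + yh - s.1)) (xh + yh - s.1)
    rw [sub_add_cancel] at this
    have h3 : |xh + yh - s.1| ≤ u * N := he
    linarith
  have hX : |s.2 + RD p T| ≤ |s.2| + RD p T := by
    have := abs_add_le s.2 (RD p T)
    rwa [abs_of_nonneg hth0] at this
  set W := |xh| + |yh|
  have hWnn : 0 ≤ W := by positivity
  have hqW : q * W ≤ (1 / 8 - 2 * u) * W := by gcongr
  have uW : u * N ≤ u * W := by gcongr
  -- `c` is dominated by `s_h`, so the first `Fast2Sum` is safe
  have hcs : |c| ≤ |s.1| := by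
    have h1 := abs_sub (s.2 + RD p T) (s.2 + RD p T - c)
    rw [sub_sub_cancel] at h1
    have h2 : u * |s.2 + RD p T| ≤ 1 / 32 * |s.2 + RD p T| := by gcongr
    linarith
  have hv : v = (RD p (s.1 + c), RD p (s.1 + c - RD p (s.1 + c))) :=
    fast2Sum_eq hp2 hsF (ordered_of_abs_le hsF hcF hcs)
  have hdecomp : s.1 + c + (T - RD p T) - (xh + yh + T) =
      (s.2 - (xh + yh - s.1)) - (s.2 + RD p T - c) := by ring
  have htri := abs_sub (s.2 - (xh + yh - s.1)) (s.2 + RD p T - c)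
  have hA : |s.1 + c| ≤ |xh + yh + T| + (T - RD p T) + |s.2 - (xh + yh - s.1)|
      + |s.2 + RD p T - c| := by
    have e1 : s.1 + c = (xh + yh + T) - (T - RD p T) +
      ((s.2 - (xh + yh - s.1)) - (s.2 + RD p T - c)) := by ring
    rw [e1]
    have e2 := abs_add_le ((xh + yh + T) - (T - RD p T))
      ((s.2 - (xh + yh - s.1)) - (s.2 + RD p T - c))
    have e3 := abs_sub (xh + yh + T) (T - RD p T)
    rw [abs_of_nonneg htl0] at e3
    linarith
  have hA4 : |T - RD p T| ≤ |s.1 + c| / 4 := by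
    rw [abs_of_nonneg htl0]
    have e2 := abs_sub (s.1 + c) c
    rw [add_sub_cancel_right] at e2
    have h1 := abs_sub (s.2 + RD p T) (s.2 + RD p T - c)
    rw [sub_sub_cancel] at h1
    have h2 : u * |s.2 + RD p T| ≤ 1 / 32 * |s.2 + RD p T| := by gcongr
    have h3 : u * RD p T ≤ 1 / 32 * RD p T := by gcongr
    linarith
  have main := tail_err hp hu hu32 hA4
  have hw : w = RD p (T - RD p T + RD p (s.1 + c - RD p (s.1 + c))) := by simp only [w, hv]
  rw [hw, hv]
  simp only at main ⊢
  set z := fast2Sum (RD p) (RD p (s.1 + c))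
    (RD p (T - RD p T + RD p (s.1 + c - RD p (s.1 + c))))
  rw [abs_of_nonneg htl0] at main
  refine collect (N := N) (W := W) (th := RD p T) (tl := T - RD p T) (sl := |s.2|)
    (δ := |s.2 - (xh + yh - s.1)|) (ε := |s.2 + RD p T - c|) (A := |s.1 + c|)
    hu0 hu32 hq0 (by linarith) (abs_nonneg _) hN0 (by linarith) hW (by linarith) htl hδ hsl
    ?_ hA ?_
  · have hr : u * |s.2 + RD p T| ≤ u * (|s.2| + RD p T) := by gcongr
    rcases hc with ⟨h1, h2⟩ | h | h
    · refine Or.inl ⟨by linarith, ?_⟩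
      linarith
    · exact Or.inr (Or.inl h)
    · exact Or.inr (Or.inr (by linarith))
  · have : z.1 + z.2 - (xh + yh + T) = (z.1 + z.2 - (s.1 + c + (T - RD p T))) +
        ((s.2 - (xh + yh - s.1)) - (s.2 + RD p T - c)) := by ring
    rw [this]
    have := abs_add_le (z.1 + z.2 - (s.1 + c + (T - RD p T)))
      ((s.2 - (xh + yh - s.1)) - (s.2 + RD p T - c))
    linarith

lemma RD_bound {p : ℕ} (hp : 6 ≤ p) {u q : ℝ} (hu : u = (2 : ℝ) ^ (1 - (p : ℤ)))
    (hu32 : u ≤ 1 / 32) (hq0 : 0 ≤ q) (hq : q ≤ 1 / 8 - 2 * u) {xh xl yh yl : ℝ}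
    (hxh : xh ∈ Fp p) (hxl : xl ∈ Fp p) (hyh : yh ∈ Fp p) (hyl : yl ∈ Fp p)
    (hx0 : 0 ≤ xl) (hy0 : 0 ≤ yl) (hx : xl ≤ q * |xh|) (hy : yl ≤ q * |yh|) :
    |(modAccurateAdd (RD p) xh xl yh yl).1 + (modAccurateAdd (RD p) xh xl yh yl).2 -
        (xh + xl + yh + yl)| ≤
      (3 * (q * u) + 15 * u ^ 2 + 1000 * (u ^ 3 + u ^ 2 * q)) * |xh + xl + yh + yl| := by
  have hp1 : 1 ≤ p := by omega
  have hu0 : 0 < u := hu ▸ two_zpow_pos _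
  obtain ⟨htl, heq⟩ := modAccurateAdd_RD (by omega : 2 ≤ p) (xh := xh) (yh := yh) hxl hyl hx0 hy0
  rw [heq, show xh + xl + yh + yl = xh + yh + (xl + yl) by ring]
  have hT : 0 ≤ xl + yl := by linarith
  by_cases hcan : |xh| + |yh| ≤ 3 * |xh + yh|
  · exact spread_err hp hu hu32 hq0 hq hxh hyh hT (by linarith) hcan
  push Not at hcan
  -- failure of `hcan` forces opposite signs and a ratio of at most two
  have hcan2 : |xh + yh| ≤ min |xh| |yh| ∧ |xh| + |yh| ≤ 3 * min |xh| |yh| ∧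
      0 < min |xh| |yh| := by
    rcases min_cases |xh| |yh| with ⟨h1, h2⟩ | ⟨h1, h2⟩ <;> rw [h1] <;>
      rcases abs_cases xh with ⟨a1, a2⟩ | ⟨a1, a2⟩ <;>
      rcases abs_cases yh with ⟨b1, b2⟩ | ⟨b1, b2⟩ <;>
      rcases abs_cases (xh + yh) with ⟨c1, c2⟩ | ⟨c1, c2⟩ <;>
      refine ⟨?_, ?_, ?_⟩ <;> linarith
  obtain ⟨m1, m2, m3⟩ := hcan2
  obtain ⟨g, g1, g2⟩ := exists_unit p m3.ne'
  rw [abs_of_pos m3] at g1 g2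
  have hsm : IsMul g (xh + yh) :=
    (isMul_of_mem hxh (g1.trans (min_le_left _ _))).add
      (isMul_of_mem hyh (g1.trans (min_le_right _ _)))
  have hF : xh + yh ∈ Fp p := mem_of_isMul hp1 hsm (m1.trans g2.le)
  rw [twoSum_exact hp1 hxh hyh hF]
  simp only [zero_add]
  rw [RD_eq hp1 (RD_mem hp1 (xl + yl))]
  refine (cancel_err hp hu hu32 hF hT htl ?_).trans ?_
  · intro h hh
    refine hsm.mono ?_
    have hTm : xl + yl ≤ min |xh| |yh| := by
      have : q * (|xh| + |yh|) ≤ 1 / 8 * (|xh| + |yh|) := by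
        gcongr
        linarith
      linarith
    have := le_of_two_zpow_lt ((hh.trans hTm).trans_lt g2)
    omega
  · gcongr
    have : 0 ≤ q * u := by positivity
    have : 0 ≤ u ^ 3 + u ^ 2 * q := by positivity
    linarith

theorem modified_accurate_relerr_bound_directed :
    ∃ C : ℝ, 0 ≤ C ∧
      ∀ (p : ℕ), 6 ≤ p →
        ∀ u ox oy : ℝ, u = (2 : ℝ) ^ (1 - (p : ℤ)) →
          1 ≤ ox → ox ≤ 1 / (8 * u) - 2 → 1 ≤ oy → oy ≤ 1 / (8 * u) - 2 →
          ∀ xh xl yh yl : ℝ, xh ∈ Fp p → xl ∈ Fp p → yh ∈ Fp p → yl ∈ Fp p →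
            |xl| ≤ ox * u * |xh| → |yl| ≤ oy * u * |yh| →
            ∀ R : ℝ → ℝ,
              ((R = RD p ∧ 0 ≤ xl ∧ 0 ≤ yl) ∨ (R = RU p ∧ xl ≤ 0 ∧ yl ≤ 0)) →
              |(modAccurateAdd R xh xl yh yl).1 + (modAccurateAdd R xh xl yh yl).2 -
                  (xh + xl + yh + yl)| ≤
                ((3 * max ox oy + 15) * u ^ 2 + C * (1 + max ox oy) * u ^ 3) *
                  |xh + xl + yh + yl| := by
  refine ⟨1000, by norm_num, ?_⟩
  intro p hp u ox oy hu hox hox' hoy hoy' xh xl yh yl hxh hxl hyh hyl hx hy R hR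
  have hu0 : 0 < u := hu ▸ two_zpow_pos _
  have hu32 : u ≤ 1 / 32 := by
    have h1 : (2 : ℝ) ^ (1 - (p : ℤ)) ≤ (2 : ℝ) ^ (-5 : ℤ) := two_zpow_le (by omega)
    rw [hu]
    norm_num at h1 ⊢
    exact h1
  have ho1 : 1 ≤ max ox oy := hox.trans (le_max_left _ _)
  have hq : max ox oy * u ≤ 1 / 8 - 2 * u := by
    have h1 : max ox oy ≤ 1 / (8 * u) - 2 := max_le hox' hoy'
    have h2 : max ox oy * u ≤ (1 / (8 * u) - 2) * u := by gcongr
    have h3 : (1 / (8 * u) - 2) * u = 1 / 8 - 2 * u := by field_simp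
    linarith
  have hx' : |xl| ≤ max ox oy * u * |xh| := hx.trans (by gcongr; exact le_max_left _ _)
  have hy' : |yl| ≤ max ox oy * u * |yh| := hy.trans (by gcongr; exact le_max_right _ _)
  have hq0 : 0 ≤ max ox oy * u := by positivity
  have hform : (3 * max ox oy + 15) * u ^ 2 + 1000 * (1 + max ox oy) * u ^ 3 =
      3 * (max ox oy * u * u) + 15 * u ^ 2 + 1000 * (u ^ 3 + u ^ 2 * (max ox oy * u)) := by
    ring
  rw [hform]
  rcases hR with ⟨rfl, hx0, hy0⟩ | ⟨rfl, hx0, hy0⟩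
  · rw [abs_of_nonneg hx0] at hx'
    rw [abs_of_nonneg hy0] at hy'
    exact RD_bound hp hu hu32 hq0 hq hxh hxl hyh hyl hx0 hy0 hx' hy'
  · rw [abs_of_nonpos hx0, ← abs_neg xh] at hx'
    rw [abs_of_nonpos hy0, ← abs_neg yh] at hy'
    have main := RD_bound hp hu hu32 hq0 hq (neg_mem hxh) (neg_mem hxl) (neg_mem hyh)
      (neg_mem hyl) (neg_nonneg.2 hx0) (neg_nonneg.2 hy0) hx' hy'
    rw [show -xh + -xl + -yh + -yl = -(xh + xl + yh + yl) by ring, abs_neg] at main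
    rw [modAccurateAdd_RU, Prod.fst_neg, Prod.snd_neg, ← abs_neg]
    refine le_of_eq_of_le ?_ main
    congr 1
    ring
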